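/- arXiv:2405.00730 — 2 statements merged into one kernel-verified Lean document; each statement's English description precedes it below -/
import Mathlib

section
/- Let α > 0 and β ∈ ℝ. Then m(α + β δ₀) = 2√α − β₋, where β₋ = max(−β, 0). In particular, if 2√α + β > 0, then the Sobolev-type inequality ‖u‖_∞ ≤ C ( ∫_ℝ (|u′(x)|² + α|u(x)|²) dx + β|u(0)|² )^{1/2} holds for all u ∈ H¹(ℝ), and its best (smallest possible) constant is C = (2√α − β₋)^{−1/2}. -/
open MeasureTheory Filter Real Topology

/-- The supremum norm `‖u‖_∞` of a (bounded continuous) function `u : ℝ → ℝ`. -/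
noncomputable def supNorm (u : ℝ → ℝ) : ℝ := ⨆ x : ℝ, |u x|

/-- `u` is (the continuous representative of) an element of `H¹(ℝ)`:
`u` is continuous, `u ∈ L²(ℝ)`, and there is a weak derivative `u' ∈ L²(ℝ)`,
i.e. `u x = u 0 + ∫_0^x u'`. -/
def IsH1 (u : ℝ → ℝ) : Prop :=
  Continuous u ∧ MemLp u 2 (volume : Measure ℝ) ∧
    ∃ u' : ℝ → ℝ, MemLp u' 2 (volume : Measure ℝ) ∧
      ∀ x : ℝ, u x = u 0 + ∫ t in (0:ℝ)..x, u' t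

/-- The Dirichlet energy `∫_ℝ |u'(x)|² dx`.  (For `u ∈ H¹(ℝ)` the classical
derivative `deriv u` exists a.e. and coincides a.e. with the weak derivative.) -/
noncomputable def energy (u : ℝ → ℝ) : ℝ := ∫ x : ℝ, (deriv u x) ^ 2

/-- `I(u; α + βδ₀) = ∫_ℝ (|u'|² + α|u|²) dx + β|u(0)|²`. -/
noncomputable def Iab (α β : ℝ) (u : ℝ → ℝ) : ℝ :=
  (∫ x : ℝ, ((deriv u x) ^ 2 + α * (u x) ^ 2)) + β * (u 0) ^ 2

/-- `m(α + βδ₀) = inf { I(u;α+βδ₀)/‖u‖_∞² ; u ∈ H¹(ℝ), u ≢ 0 }`. -/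
noncomputable def mab (α β : ℝ) : ℝ :=
  sInf {r : ℝ | ∃ u : ℝ → ℝ, IsH1 u ∧ u ≠ 0 ∧ r = Iab α β u / (supNorm u) ^ 2}

/-!
Write `s = √α`. Integrating `u'² + s²u² ≥ ±s(u²)'` with the plus sign to the left of a point `y`
and the minus sign to its right gives `2s u(y)² ≤ ∫ (u'² + αu²)`, because `u²` is integrable and so
gets arbitrarily small near `±∞`. Since `β u(0)² ≥ -β₋ ‖u‖_∞²`, this bounds the quotient below by
`2√α - β₋`. Equality on the half-lines forces `u = exp (-s|x - y|)`, whose quotient is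
`2√α + β exp (-2s|y|)`: the infimum is attained at `y = 0` if `β ≤ 0` and approached as `y → ∞`
if `β ≥ 0`. When the infimum is positive, its inverse square root is the best constant.
-/

section Integrability

theorem exists_mem_lt_of_integrableOn {X : Type*} [MeasurableSpace X] {μ : Measure X}
    {f : X → ℝ} {S : Set X} (hf : IntegrableOn f S μ) (hS : μ S = ⊤) {ε : ℝ} (hε : 0 < ε) :
    ∃ x ∈ S, f x < ε := by
  by_contra! hge
  refine (Integrable.measure_ge_lt_top hf hε).ne ?_
  exact (Measure.restrict_apply_superset hge).trans hS

theorem intervalIntegrable_of_locallyIntegrable {E : Type*} [NormedAddCommGroup E] {μ : Measure ℝ}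
    {f : ℝ → E} (hf : LocallyIntegrable f μ) (a b : ℝ) : IntervalIntegrable f μ a b :=
  intervalIntegrable_iff.mpr <|
    (hf.integrableOn_isCompact isCompact_uIcc).mono_set Set.uIoc_subset_uIcc

theorem integral_exp_neg_mul_abs {c : ℝ} (hc : 0 < c) : ∫ x : ℝ, exp (-c * |x|) = 2 / c := by
  rw [integral_comp_abs (f := fun x => exp (-c * x)), integral_exp_mul_Ioi (neg_lt_zero.mpr hc) 0,
    mul_zero, exp_zero, neg_div_neg_eq, mul_one_div]

end Integrability

theorem mul_sq_sub_sq_le_integral_deriv_sq_add {u : ℝ → ℝ} {a b : ℝ} (s : ℝ) (hab : a ≤ b)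
    (hac : AbsolutelyContinuousOnInterval u a b)
    (hu : IntervalIntegrable (fun x => deriv u x ^ 2 + s ^ 2 * u x ^ 2) volume a b) :
    s * (u b ^ 2 - u a ^ 2) ≤ ∫ x in a..b, (deriv u x ^ 2 + s ^ 2 * u x ^ 2) := by
  have hderiv := hac.intervalIntegrable_deriv
  have hint : IntervalIntegrable (fun x => deriv u x * u x + u x * deriv u x) volume a b :=
    (hderiv.mul_continuousOn hac.continuousOn).add (hderiv.continuousOn_mul hac.continuousOn)
  calc s * (u b ^ 2 - u a ^ 2)
      = ∫ x in a..b, s * (deriv u x * u x + u x * deriv u x) := by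
        rw [intervalIntegral.integral_const_mul, hac.integral_deriv_mul_eq_sub hac, sq, sq]
    _ ≤ ∫ x in a..b, (deriv u x ^ 2 + s ^ 2 * u x ^ 2) :=
        intervalIntegral.integral_mono_on hab (hint.const_mul s) hu fun x _ => by
          linarith [sq_nonneg (deriv u x - s * u x)]

theorem supNorm_nonneg (u : ℝ → ℝ) : 0 ≤ supNorm u :=
  Real.iSup_nonneg fun x => abs_nonneg (u x)

theorem isH1_of_memLp_deriv {u : ℝ → ℝ} {s : Set ℝ} (hs : s.Countable) (hc : Continuous u)
    (hd : ∀ x ∉ s, DifferentiableAt ℝ u x) (hu : MemLp u 2) (hu' : MemLp (deriv u) 2) :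
    IsH1 u := by
  refine ⟨hc, hu, deriv u, hu', fun x => ?_⟩
  have hint : IntervalIntegrable (deriv u) volume 0 x :=
    intervalIntegrable_of_locallyIntegrable (hu'.locallyIntegrable one_le_two) 0 x
  rw [integral_eq_of_hasDerivAt_off_countable u (deriv u) hs hc.continuousOn
    (fun y hy => (hd y hy.2).hasDerivAt) hint, add_sub_cancel]

namespace IsH1

variable {u : ℝ → ℝ}

theorem memLp_deriv (hu : IsH1 u) : MemLp (deriv u) 2 := by
  obtain ⟨-, -, v, hv, hrep⟩ := hu
  refine hv.ae_eq ?_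
  have hloc := hv.locallyIntegrable one_le_two
  filter_upwards [LocallyIntegrable.ae_hasDerivAt_integral hloc] with x hx
  rw [funext hrep, ((hx 0).const_add (u 0)).deriv]

theorem absolutelyContinuousOnInterval (hu : IsH1 u) (a b : ℝ) :
    AbsolutelyContinuousOnInterval u a b := by
  obtain ⟨-, -, v, hv, hrep⟩ := hu
  have hint := intervalIntegrable_of_locallyIntegrable (hv.locallyIntegrable one_le_two)
  have hrep_left : u = fun x => u a + ∫ t in a..x, v t := by
    funext x
    rw [hrep x, hrep a, add_assoc,
      intervalIntegral.integral_add_adjacent_intervals (hint 0 a) (hint a x)]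
  have hconst : AbsolutelyContinuousOnInterval (fun _ : ℝ => u a) a b :=
    (LipschitzWith.const (u a)).lipschitzOnWith.absolutelyContinuousOnInterval
  rw [hrep_left]
  exact hconst.add
    ((hint a b).absolutelyContinuousOnInterval_intervalIntegral Set.left_mem_uIcc)

theorem integrable_deriv_sq_add (hu : IsH1 u) (α : ℝ) :
    Integrable (fun x => deriv u x ^ 2 + α * u x ^ 2) :=
  hu.memLp_deriv.integrable_sq.add (hu.2.1.integrable_sq.const_mul α)

theorem two_mul_sqrt_mul_sq_le_integral (hu : IsH1 u) {α : ℝ} (hα : 0 ≤ α) (y : ℝ) :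
    2 * √α * u y ^ 2 ≤ ∫ x, (deriv u x ^ 2 + α * u x ^ 2) := by
  have hint := hu.integrable_deriv_sq_add α
  have interval_bound (s a b : ℝ) (hs : s ^ 2 = α) (hab : a ≤ b) :
      s * (u b ^ 2 - u a ^ 2) ≤ ∫ x in a..b, (deriv u x ^ 2 + α * u x ^ 2) := by
    subst hs
    exact mul_sq_sub_sq_le_integral_deriv_sq_add s hab (hu.absolutelyContinuousOnInterval a b)
      hint.intervalIntegrable
  refine le_of_forall_pos_le_add fun ε hε => ?_
  have hδ : 0 < ε / (2 * √α + 1) := by positivity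
  have hsq := hu.2.1.integrable_sq
  obtain ⟨a, hay, ha⟩ :=
    exists_mem_lt_of_integrableOn (hsq.integrableOn (s := Set.Iio y)) volume_Iio hδ
  obtain ⟨b, hyb, hb⟩ :=
    exists_mem_lt_of_integrableOn (hsq.integrableOn (s := Set.Ioi y)) volume_Ioi hδ
  rw [Set.mem_Iio] at hay
  rw [Set.mem_Ioi] at hyb
  have hleft := interval_bound √α a y (sq_sqrt hα) hay.le
  have hright := interval_bound (-√α) y b (by rw [neg_sq, sq_sqrt hα]) hyb.le
  have hsplit := intervalIntegral.integral_add_adjacent_intervals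
    (hint.intervalIntegrable (a := a) (b := y)) (hint.intervalIntegrable (a := y) (b := b))
  have hwhole : ∫ x in a..b, (deriv u x ^ 2 + α * u x ^ 2) ≤
      ∫ x, (deriv u x ^ 2 + α * u x ^ 2) := by
    rw [intervalIntegral.integral_of_le (hay.trans hyb).le]
    exact setIntegral_le_integral hint <| .of_forall fun x =>
      show 0 ≤ deriv u x ^ 2 + α * u x ^ 2 by positivity
  have htail : √α * (u a ^ 2 + u b ^ 2) ≤ ε := by
    rw [lt_div_iff₀ (by positivity)] at ha hb
    linarith [sq_nonneg (u a), sq_nonneg (u b)]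
  linarith

theorem bddAbove_range_abs (hu : IsH1 u) : BddAbove (Set.range fun x => |u x|) := by
  refine ⟨√((∫ x, (deriv u x ^ 2 + 1 * u x ^ 2)) / 2), ?_⟩
  rintro _ ⟨y, rfl⟩
  have hy := hu.two_mul_sqrt_mul_sq_le_integral zero_le_one y
  rw [sqrt_one] at hy
  exact abs_le_sqrt (by linarith)

theorem abs_le_supNorm (hu : IsH1 u) (x : ℝ) : |u x| ≤ supNorm u :=
  le_ciSup hu.bddAbove_range_abs x

theorem supNorm_pos (hu : IsH1 u) (hne : u ≠ 0) : 0 < supNorm u := by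
  obtain ⟨x, hx⟩ := Function.ne_iff.mp hne
  exact (abs_pos.mpr hx).trans_le (hu.abs_le_supNorm x)

theorem two_mul_sqrt_mul_supNorm_sq_le_integral (hu : IsH1 u) {α : ℝ} (hα : 0 ≤ α) :
    2 * √α * supNorm u ^ 2 ≤ ∫ x, (deriv u x ^ 2 + α * u x ^ 2) := by
  rcases hα.eq_or_lt with rfl | hα
  · simpa using integral_nonneg fun x => sq_nonneg (deriv u x)
  have hs : 0 < 2 * √α := by positivity
  have hsup : supNorm u ≤ √((∫ x, (deriv u x ^ 2 + α * u x ^ 2)) / (2 * √α)) :=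
    ciSup_le fun y => abs_le_sqrt <| (le_div_iff₀' hs).mpr <|
      hu.two_mul_sqrt_mul_sq_le_integral hα.le y
  have hnonneg : 0 ≤ ∫ x, (deriv u x ^ 2 + α * u x ^ 2) :=
    (by positivity : 0 ≤ 2 * √α * u 0 ^ 2).trans (hu.two_mul_sqrt_mul_sq_le_integral hα.le 0)
  exact (le_div_iff₀' hs).mp <| (le_sqrt (supNorm_nonneg u) (div_nonneg hnonneg hs.le)).mp hsup

theorem mul_supNorm_sq_le_Iab (hu : IsH1 u) {α : ℝ} (hα : 0 ≤ α) (β : ℝ) :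
    (2 * √α - max (-β) 0) * supNorm u ^ 2 ≤ Iab α β u := by
  have hpoint : u 0 ^ 2 ≤ supNorm u ^ 2 := sq_le_sq.mpr <|
    (hu.abs_le_supNorm 0).trans (le_abs_self _)
  have hdelta : -max (-β) 0 * supNorm u ^ 2 ≤ β * u 0 ^ 2 :=
    calc -max (-β) 0 * supNorm u ^ 2
        ≤ -max (-β) 0 * u 0 ^ 2 :=
          mul_le_mul_of_nonpos_left hpoint (neg_nonpos.mpr (le_max_right _ _))
      _ ≤ β * u 0 ^ 2 :=
          mul_le_mul_of_nonneg_right (neg_le.mp (le_max_left _ _)) (sq_nonneg _)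
  rw [Iab]
  linarith [hu.two_mul_sqrt_mul_supNorm_sq_le_integral hα]

theorem mab_mul_supNorm_sq_le_Iab (hu : IsH1 u) {α : ℝ} (hα : 0 ≤ α) (β : ℝ) :
    mab α β * supNorm u ^ 2 ≤ Iab α β u := by
  rcases eq_or_ne u 0 with rfl | hne
  · simp [Iab, supNorm]
  have hpos := hu.supNorm_pos hne
  rw [← le_div_iff₀ (by positivity)]
  refine csInf_le ⟨2 * √α - max (-β) 0, ?_⟩ ⟨u, hu, hne, rfl⟩
  rintro _ ⟨v, hv, hvne, rfl⟩
  have hvpos := hv.supNorm_pos hvne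
  exact (le_div_iff₀ (by positivity)).mpr (hv.mul_supNorm_sq_le_Iab hα β)

end IsH1

section Peakon

/-- The peakon `x ↦ exp (-s|x - h|)` with crest at `h`: for `s > 0`, the extremal function of
`2s ‖u‖_∞² ≤ ∫ (u'² + s²u²)`. -/
noncomputable def peakon (s h : ℝ) : ℝ → ℝ := fun x => exp (-s * |x - h|)

variable {s : ℝ}

theorem peakon_sq (s h x : ℝ) : peakon s h x ^ 2 = exp (-(2 * s) * |x - h|) := by
  rw [peakon, ← exp_nat_mul]
  congr 1
  push_cast
  ring

theorem peakon_ne_zero (s h : ℝ) : peakon s h ≠ 0 :=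
  Function.ne_iff.mpr ⟨0, (exp_pos _).ne'⟩

theorem continuous_peakon (s h : ℝ) : Continuous (peakon s h) := by
  unfold peakon
  fun_prop

theorem hasDerivAt_peakon (s : ℝ) {h x : ℝ} (hx : x ≠ h) :
    HasDerivAt (peakon s h) (peakon s h x * (-s * SignType.sign (x - h))) x :=
  (((hasDerivAt_abs (sub_ne_zero.mpr hx)).comp_sub_const x h).const_mul (-s)).exp

theorem deriv_peakon_sq (s : ℝ) {h x : ℝ} (hx : x ≠ h) :
    deriv (peakon s h) x ^ 2 = s ^ 2 * peakon s h x ^ 2 := by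
  have hsign : (SignType.sign (x - h) : ℝ) ^ 2 = 1 := by
    rcases (sub_ne_zero.mpr hx).lt_or_gt with hneg | hpos
    · simp [hneg]
    · simp [hpos]
  rw [(hasDerivAt_peakon s hx).deriv, mul_pow, mul_pow, hsign, neg_sq, mul_one, mul_comm]

theorem deriv_peakon_sq_ae (s h : ℝ) :
    (fun x => deriv (peakon s h) x ^ 2) =ᵐ[volume] fun x => s ^ 2 * peakon s h x ^ 2 := by
  filter_upwards [volume.ae_ne h] with x hx using deriv_peakon_sq s hx

theorem integral_peakon_sq (hs : 0 < s) (h : ℝ) : ∫ x, peakon s h x ^ 2 = s⁻¹ := by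
  simp_rw [peakon_sq]
  rw [integral_sub_right_eq_self (fun x => exp (-(2 * s) * |x|)) h,
    integral_exp_neg_mul_abs (by positivity)]
  field_simp

theorem integrable_peakon_sq (hs : 0 < s) (h : ℝ) : Integrable (fun x => peakon s h x ^ 2) :=
  .of_integral_ne_zero <| by rw [integral_peakon_sq hs]; positivity

theorem isH1_peakon (hs : 0 < s) (h : ℝ) : IsH1 (peakon s h) := by
  refine isH1_of_memLp_deriv (Set.countable_singleton h) (continuous_peakon s h)
    (fun x hx => (hasDerivAt_peakon s hx).differentiableAt) ?_ ?_
  · rw [memLp_two_iff_integrable_sq (continuous_peakon s h).aestronglyMeasurable]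
    exact integrable_peakon_sq hs h
  · rw [memLp_two_iff_integrable_sq (measurable_deriv _).aestronglyMeasurable]
    exact ((integrable_peakon_sq hs h).const_mul _).congr (deriv_peakon_sq_ae s h).symm

theorem supNorm_peakon (hs : 0 ≤ s) (h : ℝ) : supNorm (peakon s h) = 1 := by
  have hle (x : ℝ) : |peakon s h x| ≤ 1 := by
    rw [peakon, abs_exp, exp_le_one_iff, neg_mul, neg_nonpos]
    positivity
  refine le_antisymm (ciSup_le hle) ?_
  calc (1 : ℝ) = |peakon s h h| := by simp [peakon]
    _ ≤ supNorm (peakon s h) := le_ciSup ⟨1, Set.forall_mem_range.mpr hle⟩ h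

theorem Iab_peakon (hs : 0 < s) (β h : ℝ) :
    Iab (s ^ 2) β (peakon s h) = 2 * s + β * exp (-(2 * s) * |h|) := by
  have hdensity : (fun x => deriv (peakon s h) x ^ 2 + s ^ 2 * peakon s h x ^ 2) =ᵐ[volume]
      fun x => 2 * s ^ 2 * peakon s h x ^ 2 := by
    filter_upwards [deriv_peakon_sq_ae s h] with x hx
    rw [hx]
    ring
  rw [Iab, integral_congr_ae hdensity, integral_const_mul, integral_peakon_sq hs, peakon_sq,
    zero_sub, abs_neg]
  field_simp

end Peakon

section Infimum

variable {α : ℝ}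

theorem le_mab {β c : ℝ} (hc : ∀ u, IsH1 u → u ≠ 0 → c * supNorm u ^ 2 ≤ Iab α β u) :
    c ≤ mab α β := by
  refine le_csInf ⟨_, peakon 1 0, isH1_peakon one_pos 0, peakon_ne_zero 1 0, rfl⟩ ?_
  rintro _ ⟨u, hu, hne, rfl⟩
  have := hu.supNorm_pos hne
  exact (le_div_iff₀ (by positivity)).mpr (hc u hu hne)

theorem mab_le_two_mul_sqrt_add (hα : 0 < α) (β h : ℝ) :
    mab α β ≤ 2 * √α + β * exp (-(2 * √α) * |h|) := by
  have hs : 0 < √α := sqrt_pos.mpr hα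
  calc mab α β = mab α β * supNorm (peakon √α h) ^ 2 := by
        rw [supNorm_peakon hs.le, one_pow, mul_one]
    _ ≤ Iab α β (peakon √α h) := (isH1_peakon hs h).mab_mul_supNorm_sq_le_Iab hα.le β
    _ = 2 * √α + β * exp (-(2 * √α) * |h|) := by
        rw [← Iab_peakon hs, sq_sqrt hα.le]

theorem mab_le_two_mul_sqrt (hα : 0 < α) (β : ℝ) : mab α β ≤ 2 * √α := by
  have hexp : Tendsto (fun h : ℝ => exp (-(2 * √α) * |h|)) atTop (𝓝 0) :=
    tendsto_exp_atBot.comp <| tendsto_abs_atTop_atTop.const_mul_atTop_of_neg <|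
      neg_lt_zero.mpr (by positivity)
  have hlim := (hexp.const_mul β).const_add (2 * √α)
  rw [mul_zero, add_zero] at hlim
  exact ge_of_tendsto' hlim (mab_le_two_mul_sqrt_add hα β)

theorem mab_eq (hα : 0 < α) (β : ℝ) : mab α β = 2 * √α - max (-β) 0 := by
  refine le_antisymm ?_ (le_mab fun u hu _ => hu.mul_supNorm_sq_le_Iab hα.le β)
  have hcrest_at_zero : mab α β ≤ 2 * √α + β := by
    simpa using mab_le_two_mul_sqrt_add hα β 0
  rcases max_cases (-β) 0 with ⟨hmax, -⟩ | ⟨hmax, -⟩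
  · rwa [hmax, sub_neg_eq_add]
  · rw [hmax, sub_zero]
    exact mab_le_two_mul_sqrt hα β

theorem isLeast_inv_sqrt_mab (hα : 0 ≤ α) {β : ℝ} (hm : 0 < mab α β) :
    IsLeast {C : ℝ | ∀ u, IsH1 u → supNorm u ≤ C * √(Iab α β u)} (√(mab α β))⁻¹ := by
  have hsqrt : 0 < √(mab α β) := sqrt_pos.mpr hm
  refine ⟨fun u hu => ?_, fun C hC => ?_⟩
  · rw [le_inv_mul_iff₀ hsqrt]
    apply le_sqrt_of_sq_le
    rw [mul_pow, sq_sqrt hm.le]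
    exact hu.mab_mul_supNorm_sq_le_Iab hα β
  · have hCpos : 0 < C := pos_of_mul_pos_left
      (((isH1_peakon one_pos 0).supNorm_pos (peakon_ne_zero 1 0)).trans_le
        (hC _ (isH1_peakon one_pos 0))) (sqrt_nonneg _)
    have hC_inv_sq : (C ^ 2)⁻¹ ≤ mab α β := le_mab fun u hu _ => by
      have hI : 0 ≤ Iab α β u :=
        (by positivity : 0 ≤ mab α β * supNorm u ^ 2).trans (hu.mab_mul_supNorm_sq_le_Iab hα β)
      rw [inv_mul_le_iff₀ (by positivity), ← sq_sqrt hI, ← mul_pow]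
      exact pow_le_pow_left₀ (supNorm_nonneg u) (hC u hu) 2
    rw [inv_le_comm₀ hsqrt hCpos]
    apply le_sqrt_of_sq_le
    rwa [inv_pow]

end Infimum

/-- **Kametaka et al.: delta-function potential.** For `α > 0` and `β ∈ ℝ`,
`m(α + βδ₀) = 2√α - β₋`, where `β₋ = max(-β,0)`.  In particular, if `2√α + β > 0`, the
Sobolev type inequality `‖u‖_∞ ≤ C I(u;α+βδ₀)^{1/2}` holds on `H¹(ℝ)` and its best
(smallest) constant is `C = (2√α - β₋)^{-1/2}`. -/
theorem mab_delta (α β : ℝ) (hα : 0 < α) :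
    mab α β = 2 * Real.sqrt α - max (-β) 0 ∧
      (0 < 2 * Real.sqrt α + β →
        (∀ u : ℝ → ℝ, IsH1 u →
          supNorm u ≤ (Real.sqrt (2 * Real.sqrt α - max (-β) 0))⁻¹ * Real.sqrt (Iab α β u)) ∧
        ∀ C : ℝ, (∀ u : ℝ → ℝ, IsH1 u → supNorm u ≤ C * Real.sqrt (Iab α β u)) →
          (Real.sqrt (2 * Real.sqrt α - max (-β) 0))⁻¹ ≤ C) := by
  refine ⟨mab_eq hα β, fun hpos => ?_⟩
  have hm : 0 < mab α β := by
    rw [mab_eq hα, sub_pos]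
    exact max_lt (by linarith) (by positivity)
  have hbest := isLeast_inv_sqrt_mab hα.le hm
  rw [mab_eq hα] at hbest
  exact ⟨hbest.1, fun C hC => hbest.2 hC⟩
end

section
/- Let V = V₀ + V₁ where V₀ ∈ L^∞(ℝ) with ess inf V₀ > 0 and V₁ is a signed Radon measure on ℝ with finite total variation. Then for each a ∈ ℝ, there exists u_a ∈ K_a such that I(u_a;V) = min{ I(u;V) : u ∈ K_a }, i.e., the infimum F(a;V) is attained. -/
open MeasureTheory Filter Real Topology

/-- Integral of `f` against a finite signed Radon measure `μ`, via its Jordan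
decomposition `μ = μ₊ - μ₋`. -/
noncomputable def sMeasInt (μ : SignedMeasure ℝ) (f : ℝ → ℝ) : ℝ :=
  (∫ x, f x ∂μ.toJordanDecomposition.posPart) -
    (∫ x, f x ∂μ.toJordanDecomposition.negPart)

/-- `I(u;V)` for a generalized potential `V = V₀ + V₁` with `V₀ ∈ L^∞(ℝ)` and
`V₁` a finite signed Radon measure:
`I(u;V) = ∫_ℝ (|u'|² + V₀|u|²) dx + ∫_ℝ |u|² dV₁`. -/
noncomputable def Itot (V₀ : ℝ → ℝ) (V₁ : SignedMeasure ℝ) (u : ℝ → ℝ) : ℝ :=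
  (∫ x : ℝ, ((deriv u x) ^ 2 + V₀ x * (u x) ^ 2)) + sMeasInt V₁ (fun x => (u x) ^ 2)

/-- Membership in `K_a = { u ∈ H¹(ℝ) ; u(a) = ‖u‖_∞ = 1 }`. -/
def InKa (a : ℝ) (u : ℝ → ℝ) : Prop := IsH1 u ∧ u a = 1 ∧ supNorm u = 1

open scoped ENNReal InnerProductSpace

/-!
Direct method. Since `V₀ ≥ 0` and `|u| ≤ 1` on `K_a`, the Dirichlet energy of `u ∈ K_a` is at most
`I(u;V)` plus the mass of the negative part of `V₁`, so along a minimizing sequence the derivatives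
are bounded in `L²` and a subsequence of them converges weakly. As all values at `a` agree,
integrating from `a` turns this into pointwise convergence `uₙ → w`. The energy does not increase
in the limit, the `V₁`-term converges by dominated convergence, and Fatou's lemma controls
`∫ V₀ w²`. Because `V₀` is bounded away from `0`, this last bound also puts `w` in `L²`, so `w` lies
in `K_a` and minimizes.
-/

section HilbertSpace

variable {𝕜 H : Type*} [RCLike 𝕜] [NormedAddCommGroup H] [InnerProductSpace 𝕜 H]

theorem exists_subseq_tendsto_inner_of_norm_le [CompleteSpace H]
    [TopologicalSpace.SeparableSpace H] {x : ℕ → H} {C : ℝ} (hx : ∀ n, ‖x n‖ ≤ C) :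
    ∃ y : H, ∃ φ : ℕ → ℕ, StrictMono φ ∧
      ∀ z : H, Tendsto (fun n => ⟪x (φ n), z⟫_𝕜) atTop (𝓝 ⟪y, z⟫_𝕜) := by
  let T := InnerProductSpace.toDual 𝕜 H
  have hT_mem (n : ℕ) : StrongDual.toWeakDual (T (x n)) ∈
      WeakDual.toStrongDual ⁻¹' Metric.closedBall (0 : StrongDual 𝕜 H) C :=
    mem_closedBall_zero_iff.2 ((T.norm_map (x n)).trans_le (hx n))
  obtain ⟨ℓ, -, φ, hφ, hlim⟩ := WeakDual.isSeqCompact_closedBall 𝕜 H 0 C hT_mem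
  refine ⟨T.symm (WeakDual.toStrongDual ℓ), φ, hφ, fun z => ?_⟩
  rw [InnerProductSpace.toDual_symm_apply]
  exact ((WeakDual.eval_continuous z).tendsto ℓ).comp hlim

theorem norm_le_of_tendsto_inner_self {ι : Type*} {l : Filter ι} [l.NeBot] {x : ι → H} {y : H}
    {r : ℝ} (hinner : Tendsto (fun i => ⟪x i, y⟫_𝕜) l (𝓝 ⟪y, y⟫_𝕜))
    (hnorm : Tendsto (fun i => ‖x i‖) l (𝓝 r)) : ‖y‖ ≤ r := by
  have hr : 0 ≤ r := ge_of_tendsto' hnorm fun i => norm_nonneg _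
  have hmul : ‖y‖ * ‖y‖ ≤ r * ‖y‖ := by
    rw [← inner_self_eq_norm_mul_norm (𝕜 := 𝕜), inner_self_re_eq_norm]
    exact le_of_tendsto_of_tendsto' hinner.norm (hnorm.mul_const _) fun i => norm_inner_le_norm _ _
  rcases (norm_nonneg y).eq_or_lt with hy | hy
  · exact hy ▸ hr
  · exact le_of_mul_le_mul_right hmul hy

end HilbertSpace

section Integration

variable {α : Type*} [MeasurableSpace α] {μ : Measure α}

theorem ae_essInf_le_of_memLp_top {f : α → ℝ} (hf : MemLp f ∞ μ) : ∀ᵐ x ∂μ, essInf f μ ≤ f x := by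
  obtain ⟨C, hC⟩ := eLpNormEssSup_lt_top_iff_isBoundedUnder.1 (eLpNorm_exponent_top (f := f) ▸ hf.2)
  have hbdd : IsBoundedUnder (· ≤ ·) (ae μ) fun x => |f x| := ⟨C, hC⟩
  exact ae_essInf_le (isBoundedUnder_le_abs.1 hbdd).2

theorem integrable_mul_sq_of_memLp {V u : α → ℝ} (hV : MemLp V ∞ μ) (hu : MemLp u 2 μ) :
    Integrable (fun x => V x * u x ^ 2) μ :=
  memLp_one_iff_integrable.1 ((memLp_one_iff_integrable.2 hu.integrable_sq).mul hV)

theorem memLp_two_of_integrable_mul_sq {V u : α → ℝ} {c : ℝ} (hc : 0 < c)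
    (hV : ∀ᵐ x ∂μ, c ≤ V x) (hu : AEStronglyMeasurable u μ)
    (hVu : Integrable (fun x => V x * u x ^ 2) μ) : MemLp u 2 μ := by
  refine (memLp_two_iff_integrable_sq hu).2 ((hVu.const_mul c⁻¹).mono' (hu.pow 2) ?_)
  filter_upwards [hV] with x hx
  rw [norm_of_nonneg (sq_nonneg _), ← mul_assoc]
  exact le_mul_of_one_le_left (sq_nonneg _) ((one_le_inv_mul₀ hc).2 hx)

theorem integrable_and_integral_le_of_tendsto {f : ℕ → α → ℝ} {F : α → ℝ} {L : ℝ}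
    (hf : ∀ n, Integrable (f n) μ) (hf_nonneg : ∀ n, 0 ≤ᵐ[μ] f n)
    (hlim : ∀ᵐ x ∂μ, Tendsto (fun n => f n x) atTop (𝓝 (F x)))
    (hL : Tendsto (fun n => ∫ x, f n x ∂μ) atTop (𝓝 L)) :
    Integrable F μ ∧ ∫ x, F x ∂μ ≤ L := by
  have hF_meas : AEStronglyMeasurable F μ :=
    aestronglyMeasurable_of_tendsto_ae atTop (fun n => (hf n).aestronglyMeasurable) hlim
  have hF_nonneg : 0 ≤ᵐ[μ] F := by
    filter_upwards [ae_all_iff.2 hf_nonneg, hlim] with x hx hx_lim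
    exact ge_of_tendsto' hx_lim hx
  have hL_nonneg : 0 ≤ L := ge_of_tendsto' hL fun n => integral_nonneg_of_ae (hf_nonneg n)
  have hfatou : ∫⁻ x, ENNReal.ofReal (F x) ∂μ ≤ ENNReal.ofReal L := calc
    ∫⁻ x, ENNReal.ofReal (F x) ∂μ
        = ∫⁻ x, liminf (fun n => ENNReal.ofReal (f n x)) atTop ∂μ :=
      lintegral_congr_ae (hlim.mono fun x hx => (ENNReal.tendsto_ofReal hx).liminf_eq.symm)
    _ ≤ liminf (fun n => ∫⁻ x, ENNReal.ofReal (f n x) ∂μ) atTop :=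
      lintegral_liminf_le' fun n => (hf n).aemeasurable.ennreal_ofReal
    _ = liminf (fun n => ENNReal.ofReal (∫ x, f n x ∂μ)) atTop := by
      simp_rw [ofReal_integral_eq_lintegral_ofReal (hf _) (hf_nonneg _)]
    _ = ENNReal.ofReal L := (ENNReal.tendsto_ofReal hL).liminf_eq
  refine ⟨⟨hF_meas, ?_⟩, ?_⟩
  · rw [hasFiniteIntegral_iff_ofReal hF_nonneg]
    exact hfatou.trans_lt ENNReal.ofReal_lt_top
  · rw [integral_eq_lintegral_of_nonneg_ae hF_nonneg hF_meas]
    exact ENNReal.toReal_le_of_le_ofReal hL_nonneg hfatou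

theorem tendsto_intervalIntegral_of_tendsto_inner {ν : Measure ℝ} [IsLocallyFiniteMeasure ν]
    {ι : Type*} {l : Filter ι} {f : ι → Lp ℝ 2 ν} {g : Lp ℝ 2 ν}
    (hfg : ∀ z, Tendsto (fun i => ⟪f i, z⟫_ℝ) l (𝓝 ⟪g, z⟫_ℝ)) (a b : ℝ) :
    Tendsto (fun i => ∫ t in a..b, f i t ∂ν) l (𝓝 (∫ t in a..b, g t ∂ν)) := by
  have hIoc (p q : ℝ) :
      Tendsto (fun i => ∫ t in Set.Ioc p q, f i t ∂ν) l (𝓝 (∫ t in Set.Ioc p q, g t ∂ν)) := by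
    have hpq := hfg <|
      indicatorConstLp 2 (measurableSet_Ioc (a := p) (b := q)) measure_Ioc_lt_top.ne (1 : ℝ)
    simpa only [real_inner_comm (indicatorConstLp _ _ _ _), L2.inner_indicatorConstLp_one] using hpq
  exact (hIoc a b).sub (hIoc b a)

end Integration

section SignedMeasure

variable (μ : SignedMeasure ℝ) {C : ℝ}

theorem neg_mul_negPart_univ_le_sMeasInt {f : ℝ → ℝ} (hf_nonneg : ∀ x, 0 ≤ f x)
    (hf_le : ∀ x, f x ≤ C) :
    -(C * μ.toJordanDecomposition.negPart.real Set.univ) ≤ sMeasInt μ f := by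
  have hpos : 0 ≤ ∫ x, f x ∂μ.toJordanDecomposition.posPart := integral_nonneg hf_nonneg
  have hneg := norm_integral_le_of_norm_le_const (μ := μ.toJordanDecomposition.negPart)
    (Eventually.of_forall fun x => (norm_of_nonneg (hf_nonneg x)).trans_le (hf_le x))
  rw [sMeasInt]
  linarith [(le_norm_self _).trans hneg]

theorem tendsto_sMeasInt {F : ℕ → ℝ → ℝ} {f : ℝ → ℝ} (hF_meas : ∀ n, Measurable (F n))
    (hF_le : ∀ n x, ‖F n x‖ ≤ C) (hlim : ∀ x, Tendsto (fun n => F n x) atTop (𝓝 (f x))) :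
    Tendsto (fun n => sMeasInt μ (F n)) atTop (𝓝 (sMeasInt μ f)) := by
  have hdom (ν : Measure ℝ) [IsFiniteMeasure ν] :
      Tendsto (fun n => ∫ x, F n x ∂ν) atTop (𝓝 (∫ x, f x ∂ν)) :=
    tendsto_integral_of_dominated_convergence (fun _ => C)
      (fun n => (hF_meas n).aestronglyMeasurable) (integrable_const C)
      (fun n => Eventually.of_forall (hF_le n)) (Eventually.of_forall hlim)
  exact (hdom _).sub (hdom _)

end SignedMeasure

section FiniteEnergy

/-- The homogeneous Sobolev space `Ḣ¹(ℝ)`: the functions that are primitives of an `L²` function.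
That function is encoded as the classical derivative, with which it agrees almost everywhere. -/
structure HasFiniteEnergy (u : ℝ → ℝ) : Prop where
  memLp_deriv : MemLp (deriv u) 2 volume
  integral_deriv : ∀ x y, ∫ t in x..y, deriv u t = u y - u x

theorem intervalIntegrable_of_memLp_two {g : ℝ → ℝ} (hg : MemLp g 2 volume) (a b : ℝ) :
    IntervalIntegrable g volume a b :=
  ((hg.locallyIntegrable one_le_two).integrableOn_isCompact isCompact_uIcc).intervalIntegrable

theorem deriv_primitive_ae_eq {g : ℝ → ℝ} (hg : LocallyIntegrable g volume) (a c : ℝ) :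
    deriv (fun x => c + ∫ t in a..x, g t) =ᵐ[volume] g := by
  filter_upwards [LocallyIntegrable.ae_hasDerivAt_integral hg] with x hx
  exact ((hx a).const_add c).deriv

theorem hasFiniteEnergy_primitive {g : ℝ → ℝ} (hg : MemLp g 2 volume) (a c : ℝ) :
    HasFiniteEnergy fun x => c + ∫ t in a..x, g t where
  memLp_deriv := (memLp_congr_ae (deriv_primitive_ae_eq (hg.locallyIntegrable one_le_two) a c)).2 hg
  integral_deriv x y := by
    have hcongr : ∫ t in x..y, deriv (fun x => c + ∫ t in a..x, g t) t = ∫ t in x..y, g t :=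
      intervalIntegral.integral_congr_ae_restrict
        (ae_restrict_of_ae (deriv_primitive_ae_eq (hg.locallyIntegrable one_le_two) a c))
    rw [hcongr, add_sub_add_left_eq_sub, intervalIntegral.integral_interval_sub_left] <;>
      exact intervalIntegrable_of_memLp_two hg _ _

theorem hasFiniteEnergy_of_contDiff_of_hasCompactSupport {u : ℝ → ℝ} (hu : ContDiff ℝ 1 u)
    (hsupp : HasCompactSupport u) : HasFiniteEnergy u where
  memLp_deriv := (hu.continuous_deriv le_rfl).memLp_of_hasCompactSupport hsupp.deriv
  integral_deriv x y := intervalIntegral.integral_deriv_eq_sub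
    (fun t _ => hu.differentiable one_ne_zero t)
    ((hu.continuous_deriv le_rfl).intervalIntegrable x y)

theorem energy_eq_norm_sq {u : ℝ → ℝ} {g : Lp ℝ 2 (volume : Measure ℝ)}
    (hug : deriv u =ᵐ[volume] g) : energy u = ‖g‖ ^ 2 := by
  rw [← real_inner_self_eq_norm_sq, L2.inner_def, energy]
  refine integral_congr_ae (hug.mono fun x hx => ?_)
  simp only [hx, real_inner_self_eq_norm_sq, norm_eq_abs, sq_abs]

namespace HasFiniteEnergy

variable {u : ℝ → ℝ}

theorem eq_add_integral (hu : HasFiniteEnergy u) (a x : ℝ) :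
    u x = u a + ∫ t in a..x, deriv u t := by
  rw [hu.integral_deriv, add_sub_cancel]

theorem continuous (hu : HasFiniteEnergy u) : Continuous u := by
  rw [funext (hu.eq_add_integral 0)]
  exact continuous_const.add (intervalIntegral.continuous_primitive
    (intervalIntegrable_of_memLp_two hu.memLp_deriv) 0)

theorem exists_subseq_tendsto {u : ℕ → ℝ → ℝ} (hu : ∀ n, HasFiniteEnergy (u n)) {E a c : ℝ}
    (hE : ∀ n, energy (u n) ≤ E) (ha : Tendsto (fun n => u n a) atTop (𝓝 c)) :
    ∃ w : ℝ → ℝ, HasFiniteEnergy w ∧ ∃ φ : ℕ → ℕ, StrictMono φ ∧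
      (∀ x, Tendsto (fun n => u (φ n) x) atTop (𝓝 (w x))) ∧
      ∃ r, Tendsto (fun n => energy (u (φ n))) atTop (𝓝 r) ∧ energy w ≤ r := by
  have : Fact ((2 : ℝ≥0∞) ≠ ∞) := ⟨ENNReal.ofNat_ne_top⟩
  let v (n : ℕ) : Lp ℝ 2 (volume : Measure ℝ) := (hu n).memLp_deriv.toLp (deriv (u n))
  have hv_ae (n : ℕ) : v n =ᵐ[volume] deriv (u n) := (hu n).memLp_deriv.coeFn_toLp
  have hv_norm (n : ℕ) : energy (u n) = ‖v n‖ ^ 2 := energy_eq_norm_sq (hv_ae n).symm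
  have hv_le (n : ℕ) : ‖v n‖ ≤ √E := Real.le_sqrt_of_sq_le (hv_norm n ▸ hE n)
  obtain ⟨g, ψ, hψ, hψ_weak⟩ := exists_subseq_tendsto_inner_of_norm_le (𝕜 := ℝ) hv_le
  obtain ⟨s, -, χ, hχ, hχ_norm⟩ := tendsto_subseq_of_bounded (Metric.isBounded_Icc 0 √E)
    fun n => ⟨norm_nonneg (v (ψ n)), hv_le (ψ n)⟩
  have hweak (z) : Tendsto (fun n => ⟪v (ψ (χ n)), z⟫_ℝ) atTop (𝓝 ⟪g, z⟫_ℝ) :=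
    (hψ_weak z).comp hχ.tendsto_atTop
  refine ⟨fun x => c + ∫ t in a..x, g t, hasFiniteEnergy_primitive (Lp.memLp g) a c,
    ψ ∘ χ, hψ.comp hχ, fun x => ?_, s ^ 2, ?_, ?_⟩
  · refine ((ha.comp (hψ.comp hχ).tendsto_atTop).add
      (tendsto_intervalIntegral_of_tendsto_inner hweak a x)).congr fun n => ?_
    rw [(hu _).eq_add_integral a x, intervalIntegral.integral_congr_ae_restrict
      (ae_restrict_of_ae (hv_ae _))]
    rfl
  · exact (hχ_norm.pow 2).congr fun n => (hv_norm _).symm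
  · rw [energy_eq_norm_sq (deriv_primitive_ae_eq ((Lp.memLp g).locallyIntegrable one_le_two) a c)]
    gcongr
    exact norm_le_of_tendsto_inner_self (hweak g) hχ_norm

end HasFiniteEnergy

theorem isH1_iff {u : ℝ → ℝ} : IsH1 u ↔ MemLp u 2 volume ∧ HasFiniteEnergy u := by
  constructor
  · rintro ⟨-, hu, g, hg, hug⟩
    exact ⟨hu, funext hug ▸ hasFiniteEnergy_primitive hg 0 (u 0)⟩
  · rintro ⟨hu, hE⟩
    exact ⟨hE.continuous, hu, deriv u, hE.memLp_deriv, hE.eq_add_integral 0⟩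

end FiniteEnergy

section ConstraintSet

theorem supNorm_eq_one_iff {u : ℝ → ℝ} {a : ℝ} (ha : u a = 1) :
    supNorm u = 1 ↔ ∀ x, |u x| ≤ 1 := by
  constructor
  · intro hu x
    -- An unbounded `u` would have the junk value `supNorm u = 0`.
    have hbdd : BddAbove (Set.range fun x => |u x|) := by
      by_contra hunbdd
      exact one_ne_zero (hu.symm.trans (Real.iSup_of_not_bddAbove hunbdd))
    exact (le_ciSup hbdd x).trans_eq hu
  · intro hu
    refine le_antisymm (ciSup_le hu) ?_
    have hle := le_ciSup (f := fun x => |u x|) ⟨1, Set.forall_mem_range.2 hu⟩ a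
    rwa [ha, abs_one] at hle

theorem inKa_iff {a : ℝ} {u : ℝ → ℝ} :
    InKa a u ↔ (MemLp u 2 volume ∧ HasFiniteEnergy u) ∧ u a = 1 ∧ ∀ x, |u x| ≤ 1 := by
  rw [InKa, isH1_iff]
  exact and_congr_right fun _ => and_congr_right supNorm_eq_one_iff

theorem exists_inKa (a : ℝ) : ∃ u, InKa a u := by
  let f : ContDiffBump a := ⟨1, 2, one_pos, one_lt_two⟩
  refine ⟨f, inKa_iff.2 ⟨⟨f.continuous.memLp_of_hasCompactSupport f.hasCompactSupport,
    hasFiniteEnergy_of_contDiff_of_hasCompactSupport f.contDiff f.hasCompactSupport⟩,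
    f.eventuallyEq_one.eq_of_nhds, fun x => ?_⟩⟩
  exact (abs_of_nonneg f.nonneg).trans_le f.le_one

end ConstraintSet

section Functional

variable {V₀ : ℝ → ℝ} {V₁ : SignedMeasure ℝ} {a : ℝ}

theorem Itot_eq_energy_add {u : ℝ → ℝ} (hV₀ : MemLp V₀ ∞ volume) (hu : MemLp u 2 volume)
    (hE : HasFiniteEnergy u) :
    Itot V₀ V₁ u = energy u + (∫ x, V₀ x * u x ^ 2) + sMeasInt V₁ fun x => u x ^ 2 := by
  rw [Itot, energy, integral_add hE.memLp_deriv.integrable_sq (integrable_mul_sq_of_memLp hV₀ hu)]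

theorem energy_le_Itot_add {u : ℝ → ℝ} (hV₀ : MemLp V₀ ∞ volume) (hV₀_nonneg : 0 ≤ᵐ[volume] V₀)
    (hu : InKa a u) :
    energy u ≤ Itot V₀ V₁ u + V₁.toJordanDecomposition.negPart.real Set.univ := by
  obtain ⟨⟨hu_memLp, hu_energy⟩, -, hu_le⟩ := inKa_iff.1 hu
  have hpotential : 0 ≤ ∫ x, V₀ x * u x ^ 2 :=
    integral_nonneg_of_ae (hV₀_nonneg.mono fun x hx => mul_nonneg hx (sq_nonneg _))
  have hmeasure := neg_mul_negPart_univ_le_sMeasInt V₁ (fun x => sq_nonneg (u x))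
    fun x => (sq_le_one_iff_abs_le_one _).2 (hu_le x)
  rw [Itot_eq_energy_add hV₀ hu_memLp hu_energy]
  linarith

theorem bddBelow_Itot_inKa (hV₀ : MemLp V₀ ∞ volume) (hV₀_nonneg : 0 ≤ᵐ[volume] V₀) :
    BddBelow {r : ℝ | ∃ u : ℝ → ℝ, InKa a u ∧ r = Itot V₀ V₁ u} := by
  refine ⟨-V₁.toJordanDecomposition.negPart.real Set.univ, ?_⟩
  rintro _ ⟨u, hu, rfl⟩
  have henergy : 0 ≤ energy u := integral_nonneg fun x => sq_nonneg _
  linarith [energy_le_Itot_add (V₁ := V₁) hV₀ hV₀_nonneg hu]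

theorem inKa_and_Itot_le_of_tendsto {u : ℕ → ℝ → ℝ} {w : ℝ → ℝ} {c m r : ℝ}
    (hV₀ : MemLp V₀ ∞ volume) (hc : 0 < c) (hV₀_ge : ∀ᵐ x, c ≤ V₀ x) (hu : ∀ n, InKa a (u n))
    (hw : HasFiniteEnergy w) (hlim : ∀ x, Tendsto (fun n => u n x) atTop (𝓝 (w x)))
    (henergy : Tendsto (fun n => energy (u n)) atTop (𝓝 r)) (hwr : energy w ≤ r)
    (hItot : Tendsto (fun n => Itot V₀ V₁ (u n)) atTop (𝓝 m)) :
    InKa a w ∧ Itot V₀ V₁ w ≤ m := by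
  choose hu_H1 hu_a hu_le using fun n => inKa_iff.1 (hu n)
  have hw_a : w a = 1 := tendsto_nhds_unique (hlim a) (by simp only [hu_a, tendsto_const_nhds])
  have hw_le (x : ℝ) : |w x| ≤ 1 := le_of_tendsto' (hlim x).abs fun n => hu_le n x
  have hmeasure : Tendsto (fun n => sMeasInt V₁ fun x => u n x ^ 2) atTop
      (𝓝 (sMeasInt V₁ fun x => w x ^ 2)) :=
    tendsto_sMeasInt V₁ (C := 1) (fun n => (hu_H1 n).2.continuous.measurable.pow_const 2)
      (fun n x => by simpa using hu_le n x) fun x => (hlim x).pow 2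
  have hpotential : Tendsto (fun n => ∫ x, V₀ x * u n x ^ 2) atTop
      (𝓝 (m - r - sMeasInt V₁ fun x => w x ^ 2)) := by
    refine ((hItot.sub henergy).sub hmeasure).congr fun n => ?_
    rw [Itot_eq_energy_add hV₀ (hu_H1 n).1 (hu_H1 n).2]
    ring
  obtain ⟨hw_int, hw_potential⟩ := integrable_and_integral_le_of_tendsto
    (fun n => integrable_mul_sq_of_memLp hV₀ (hu_H1 n).1)
    (fun n => hV₀_ge.mono fun x hx => mul_nonneg (hc.le.trans hx) (sq_nonneg _))
    (Eventually.of_forall fun x => ((hlim x).pow 2).const_mul (V₀ x)) hpotential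
  have hw_memLp : MemLp w 2 volume :=
    memLp_two_of_integrable_mul_sq hc hV₀_ge hw.continuous.aestronglyMeasurable hw_int
  refine ⟨inKa_iff.2 ⟨⟨hw_memLp, hw⟩, hw_a, hw_le⟩, ?_⟩
  rw [Itot_eq_energy_add hV₀ hw_memLp hw]
  linarith

theorem exists_inKa_Itot_le_of_tendsto {u : ℕ → ℝ → ℝ} {c m : ℝ} (hV₀ : MemLp V₀ ∞ volume)
    (hc : 0 < c) (hV₀_ge : ∀ᵐ x, c ≤ V₀ x) (hu : ∀ n, InKa a (u n))
    (hItot : Tendsto (fun n => Itot V₀ V₁ (u n)) atTop (𝓝 m)) :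
    ∃ w, InKa a w ∧ Itot V₀ V₁ w ≤ m := by
  obtain ⟨B, hB⟩ := hItot.bddAbove_range
  have henergy (n : ℕ) :
      energy (u n) ≤ B + V₁.toJordanDecomposition.negPart.real Set.univ := calc
    energy (u n) ≤ Itot V₀ V₁ (u n) + V₁.toJordanDecomposition.negPart.real Set.univ :=
      energy_le_Itot_add hV₀ (hV₀_ge.mono fun x hx => hc.le.trans hx) (hu n)
    _ ≤ B + V₁.toJordanDecomposition.negPart.real Set.univ := by
      gcongr
      exact hB ⟨n, rfl⟩
  have hu_a : Tendsto (fun n => u n a) atTop (𝓝 1) :=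
    tendsto_const_nhds.congr fun n => (hu n).2.1.symm
  obtain ⟨w, hw, φ, hφ, hlim, r, hr, hwr⟩ :=
    HasFiniteEnergy.exists_subseq_tendsto (fun n => (inKa_iff.1 (hu n)).1.2) henergy hu_a
  exact ⟨w, inKa_and_Itot_le_of_tendsto hV₀ hc hV₀_ge (fun n => hu (φ n)) hw hlim hr hwr
    (hItot.comp hφ.tendsto_atTop)⟩

end Functional

/-- **Attainment of `F(a;V)`.** For `V = V₀ + V₁` with `V₀ ∈ L^∞(ℝ)`, `ess inf V₀ > 0`,
and `V₁` a finite signed Radon measure, for each `a ∈ ℝ` there exists `u_a ∈ K_a` with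
`I(u_a;V) = min { I(u;V) ; u ∈ K_a }`; i.e. the infimum `F(a;V)` is attained. -/
theorem F_attained (V₀ : ℝ → ℝ) (hV₀ : MemLp V₀ ⊤ (volume : Measure ℝ))
    (hpos : 0 < essInf V₀ (volume : Measure ℝ)) (V₁ : SignedMeasure ℝ) (a : ℝ) :
    ∃ ua : ℝ → ℝ, InKa a ua ∧
      (∀ u : ℝ → ℝ, InKa a u → Itot V₀ V₁ ua ≤ Itot V₀ V₁ u) ∧
      Itot V₀ V₁ ua = sInf {r : ℝ | ∃ u : ℝ → ℝ, InKa a u ∧ r = Itot V₀ V₁ u} := by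
  have hV₀_ge : ∀ᵐ x, essInf V₀ volume ≤ V₀ x := ae_essInf_le_of_memLp_top hV₀
  set values := {r : ℝ | ∃ u : ℝ → ℝ, InKa a u ∧ r = Itot V₀ V₁ u}
  have hbdd : BddBelow values := bddBelow_Itot_inKa hV₀ (hV₀_ge.mono fun x hx => hpos.le.trans hx)
  have hne : values.Nonempty := (exists_inKa a).elim fun u hu => ⟨_, u, hu, rfl⟩
  obtain ⟨r, -, hr_lim, hr_mem⟩ := exists_seq_tendsto_sInf hne hbdd
  choose u hu hru using hr_mem
  obtain ⟨w, hw, hw_le⟩ := exists_inKa_Itot_le_of_tendsto hV₀ hpos hV₀_ge hu (hr_lim.congr hru)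
  exact ⟨w, hw, fun v hv => hw_le.trans (csInf_le hbdd ⟨v, hv, rfl⟩),
    hw_le.antisymm (csInf_le hbdd ⟨w, hw, rfl⟩)⟩
end
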